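/- arXiv:1207.4642 — 2 statements merged into one kernel-verified Lean document; each statement's English description precedes it below -/
import Mathlib

section
/- Let f ∈ L¹[0,1] and γ > 0. For every u ∈ L¹[0,1] and every sequence (u^k) in L¹[0,1] with ‖u^k − u‖_{L¹} → 0 as k → ∞, one has P_γ(u) ≤ liminf_{k→∞} Q_γ^k(u^k). -/
open MeasureTheory Filter Set
open scoped ENNReal Classical

noncomputable section

/-- The Lebesgue measure restricted to `[0,1]`. -/
def mu01 : Measure ℝ := volume.restrict (Set.Icc (0:ℝ) 1)

/-- The step function determined by partition points `x` and values `a`. -/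
def stepF {m : ℕ} (x : Fin (m + 1) → ℝ) (a : Fin m → ℝ) : ℝ → ℝ := fun t =>
  ∑ l : Fin m, Set.indicator (Set.Ioo (x l.castSucc) (x l.succ)) (fun _ => a l) t

/-- `u` is a.e. on `[0,1]` represented by the step function with partition `x` and values `a`. -/
def IsPCRep (u : ℝ → ℝ) {m : ℕ} (x : Fin (m + 1) → ℝ) (a : Fin m → ℝ) : Prop :=
  StrictMono x ∧ x 0 = 0 ∧ x (Fin.last m) = 1 ∧ ∀ᵐ t ∂mu01, u t = stepF x a t

/-- `u` is piecewise constant on `[0,1]` (up to a.e. equality). -/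
def IsPC (u : ℝ → ℝ) : Prop :=
  ∃ (m : ℕ) (x : Fin (m + 1) → ℝ) (a : Fin m → ℝ), IsPCRep u x a

/-- The number of jumps `J(u)`: the minimal number of interior partition points over all
piecewise constant representations of `u`. -/
def jumps (u : ℝ → ℝ) : ℕ :=
  sInf {jj : ℕ | ∃ (x : Fin (jj + 2) → ℝ) (a : Fin (jj + 1) → ℝ), IsPCRep u x a}

/-- `u` is piecewise constant with all jump locations inside `S`. -/
def IsPCIn (u : ℝ → ℝ) (S : Set ℝ) : Prop :=
  ∃ (m : ℕ) (x : Fin (m + 1) → ℝ) (a : Fin m → ℝ), IsPCRep u x a ∧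
    ∀ i : Fin (m + 1), i ≠ 0 → i ≠ Fin.last m → x i ∈ S

/-- The `L¹[0,1]` distance of two functions. -/
def L1dist (u v : ℝ → ℝ) : ℝ := ∫ t, |u t - v t| ∂mu01

/-- The continuous `L¹`-Potts functional `P_γ` with data `f`. -/
def Potts (γ : ℝ) (f u : ℝ → ℝ) : ℝ≥0∞ :=
  if IsPC u then ENNReal.ofReal (γ * (jumps u : ℝ) + L1dist u f) else ⊤

/-- The (semi-)discrete `L¹`-Potts functional with data `f`, restricted to piecewise
constant functions whose jumps lie in `S`. -/
def PottsIn (γ : ℝ) (f : ℝ → ℝ) (S : Set ℝ) (u : ℝ → ℝ) : ℝ≥0∞ :=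
  if IsPCIn u S then ENNReal.ofReal (γ * (jumps u : ℝ) + L1dist u f) else ⊤

open Topology

instance neBot_nhds_inf_ae_volume (x : ℝ) : (𝓝 x ⊓ ae (volume : Measure ℝ)).NeBot := by
  rw [inf_neBot_iff]
  intro s hs t ht
  obtain ⟨U, hUs, hU, hx⟩ := mem_nhds_iff.1 hs
  have hpos : 0 < volume (U ∩ t) := by
    rw [measure_inter_conull (compl_compl t ▸ ht : volume tᶜ = 0)]
    exact hU.measure_pos volume ⟨x, hx⟩
  obtain ⟨y, hyU, hyt⟩ := nonempty_of_measure_ne_zero hpos.ne'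
  exact ⟨y, hUs hyU, hyt⟩

/-- `u` is almost everywhere equal to `c` in a neighbourhood of `x`. -/
def AEConstNear (u : ℝ → ℝ) (c x : ℝ) : Prop :=
  ∀ᶠ t in 𝓝 x ⊓ ae (volume : Measure ℝ), u t = c

lemma aeConstNear_iff {u : ℝ → ℝ} {c x : ℝ} :
    AEConstNear u c x ↔ ∃ U ∈ 𝓝 x, ∀ᵐ t, t ∈ U → u t = c := by
  rw [AEConstNear, eventually_inf]
  constructor
  · rintro ⟨s, hs, t, ht, h⟩
    exact ⟨s, hs, by filter_upwards [ht] with y hy hys using h y ⟨hys, hy⟩⟩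
  · rintro ⟨U, hU, h⟩
    exact ⟨U, hU, {t | t ∈ U → u t = c}, h, fun y hy => hy.2 hy.1⟩

lemma isOpen_aeConstNear (u : ℝ → ℝ) (c : ℝ) : IsOpen {x | AEConstNear u c x} := by
  rw [isOpen_iff_mem_nhds]
  intro x hx
  obtain ⟨U, hU, h⟩ := aeConstNear_iff.1 hx
  filter_upwards [eventually_mem_nhds_iff.2 hU] with y hy
  exact aeConstNear_iff.2 ⟨U, hy, h⟩

lemma AEConstNear.unique {u : ℝ → ℝ} {c d x : ℝ} (hc : AEConstNear u c x)
    (hd : AEConstNear u d x) : c = d := by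
  obtain ⟨t, h₁, h₂⟩ := (hc.and hd).exists
  exact h₁.symm.trans h₂

/-- A function that is locally a.e. constant on a preconnected set is a.e. constant there. -/
lemma exists_ae_eq_const_of_preconnected {u : ℝ → ℝ} {s : Set ℝ} (hs : IsPreconnected s)
    (h : ∀ x ∈ s, ∃ c, AEConstNear u c x) : ∃ c, ∀ᵐ t, t ∈ s → u t = c := by
  rcases s.eq_empty_or_nonempty with rfl | ⟨x₀, hx₀⟩
  · exact ⟨0, by simp⟩
  obtain ⟨c, hc⟩ := h x₀ hx₀
  have hsub : s ⊆ {x | AEConstNear u c x} := by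
    refine hs.subset_left_of_subset_union (isOpen_aeConstNear u c)
      (isOpen_iUnion fun d => isOpen_iUnion fun _ : d ≠ c => isOpen_aeConstNear u d)
      ?_ ?_ ⟨x₀, hx₀, hc⟩
    · rw [Set.disjoint_left]
      intro x hx hx'
      simp only [mem_iUnion] at hx'
      obtain ⟨d, hd, hxd⟩ := hx'
      exact hd (AEConstNear.unique hxd hx)
    · intro x hx
      obtain ⟨d, hd⟩ := h x hx
      by_cases hdc : d = c
      · exact Or.inl (hdc ▸ hd)
      · exact Or.inr (mem_iUnion₂.2 ⟨d, hdc, hd⟩)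
  refine ⟨c, ?_⟩
  have hnull : volume {t | t ∈ s ∧ u t ≠ c} = 0 := by
    refine measure_null_of_locally_null _ fun x hx => ?_
    obtain ⟨U, hU, hUc⟩ := aeConstNear_iff.1 (hsub hx.1)
    refine ⟨U ∩ {t | t ∈ s ∧ u t ≠ c}, inter_mem (mem_nhdsWithin_of_mem_nhds hU)
      self_mem_nhdsWithin, ?_⟩
    refine measure_mono_null ?_ (ae_iff.1 hUc)
    rintro t ⟨htU, -, ht⟩ h'
    exact ht (h' htU)
  rw [ae_iff]
  simpa only [Classical.not_imp] using hnull

/-- A pointwise a.e. limit of functions that are infinitely often a.e. constant on `s` is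
a.e. constant on `s`. -/
lemma exists_ae_eq_const_of_tendsto {u : ℝ → ℝ} {v : ℕ → ℝ → ℝ} {s : Set ℝ}
    (hlim : ∀ᵐ t, t ∈ s → Tendsto (fun k => v k t) atTop (𝓝 (u t)))
    (hv : ∃ᶠ k in atTop, ∃ c, ∀ᵐ t, t ∈ s → v k t = c) :
    ∃ c, ∀ᵐ t, t ∈ s → u t = c := by
  have hex : ∀ k, ∃ c, (∃ d, ∀ᵐ t, t ∈ s → v k t = d) → ∀ᵐ t, t ∈ s → v k t = c := fun k => by
    by_cases hk : ∃ d, ∀ᵐ t, t ∈ s → v k t = d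
    · exact ⟨hk.choose, fun _ => hk.choose_spec⟩
    · exact ⟨0, fun h => (hk h).elim⟩
  choose c hc using hex
  have hae : ∀ᵐ t, ∀ k, (∃ d, ∀ᵐ t, t ∈ s → v k t = d) → t ∈ s → v k t = c k := by
    rw [ae_all_iff]
    intro k
    by_cases hk : ∃ d, ∀ᵐ t, t ∈ s → v k t = d
    · filter_upwards [hc k hk] with t ht _ using ht
    · exact Eventually.of_forall fun t h => (hk h).elim
  by_cases hgood : ∃ t₀ ∈ s, Tendsto (fun k => v k t₀) atTop (𝓝 (u t₀)) ∧
      ∀ k, (∃ d, ∀ᵐ t, t ∈ s → v k t = d) → v k t₀ = c k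
  · obtain ⟨t₀, -, hlim₀, hc₀⟩ := hgood
    refine ⟨u t₀, ?_⟩
    filter_upwards [hlim, hae] with t ht htc hts
    have hfreq : ∃ᶠ k in atTop, v k t - v k t₀ ∈ ({0} : Set ℝ) :=
      hv.mono fun k hk => by simp [htc k hk hts, hc₀ k hk]
    exact sub_eq_zero.1 (isClosed_singleton.mem_of_frequently_of_tendsto hfreq
      ((ht hts).sub hlim₀))
  · refine ⟨0, ?_⟩
    filter_upwards [hlim, hae] with t ht htc hts
    exact (hgood ⟨t, hts, ht hts, fun k hk => htc k hk hts⟩).elim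

lemma stepF_eq_of_ordConnected {m : ℕ} (x : Fin (m + 1) → ℝ) (a : Fin m → ℝ) {s : Set ℝ}
    (hs : s.OrdConnected) (hx : ∀ i, x i ∉ s) {t r : ℝ} (ht : t ∈ s) (hr : r ∈ s) :
    stepF x a t = stepF x a r := by
  have hlt : ∀ {p q : ℝ}, p ∈ s → q ∈ s → ∀ i, x i < p → x i < q := by
    intro p q hp hq i hi
    by_contra! h
    exact hx i (hs.out hq hp ⟨h, hi.le⟩)
  have hgt : ∀ {p q : ℝ}, p ∈ s → q ∈ s → ∀ i, p < x i → q < x i := by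
    intro p q hp hq i hi
    by_contra! h
    exact hx i (hs.out hp hq ⟨hi.le, h⟩)
  refine Finset.sum_congr rfl fun l _ => ?_
  have hiff : t ∈ Ioo (x l.castSucc) (x l.succ) ↔ r ∈ Ioo (x l.castSucc) (x l.succ) :=
    ⟨fun h => ⟨hlt ht hr _ h.1, hgt ht hr _ h.2⟩, fun h => ⟨hlt hr ht _ h.1, hgt hr ht _ h.2⟩⟩
  simp only [indicator, hiff]

lemma stepF_eq_of_mem {m : ℕ} {x : Fin (m + 1) → ℝ} (hx : StrictMono x) (a : Fin m → ℝ)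
    {l : Fin m} {t : ℝ} (ht : t ∈ Ioo (x l.castSucc) (x l.succ)) : stepF x a t = a l := by
  rw [stepF, Finset.sum_eq_single l, indicator_of_mem ht]
  · intro j _ hj
    refine indicator_of_notMem (fun h => ?_) _
    rcases lt_or_gt_of_ne hj with hlt | hlt
    · exact (h.2.trans_le (hx.monotone (Fin.succ_le_castSucc_iff.2 hlt))).not_gt ht.1
    · exact (ht.2.trans_le (hx.monotone (Fin.succ_le_castSucc_iff.2 hlt))).not_gt h.1
  · simp

lemma exists_mem_Ioo_of_forall_ne {m : ℕ} {x : Fin (m + 1) → ℝ} {t : ℝ} (h₀ : x 0 < t)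
    (h₁ : t < x (Fin.last m)) (hx : ∀ i, t ≠ x i) :
    ∃ l : Fin m, t ∈ Ioo (x l.castSucc) (x l.succ) := by
  by_contra! h
  have hall : ∀ i, x i < t := by
    intro i
    induction i using Fin.induction with
    | zero => exact h₀
    | succ l ih => exact lt_of_le_of_ne (not_lt.1 fun h' => h l ⟨ih, h'⟩) (hx _).symm
  exact (hall _).not_gt h₁

lemma ae_mu01_iff {p : ℝ → Prop} : (∀ᵐ t ∂mu01, p t) ↔ ∀ᵐ t, t ∈ Icc (0 : ℝ) 1 → p t :=
  ae_restrict_iff' measurableSet_Icc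

lemma exists_isPCRep_of_finset {u : ℝ → ℝ} (F : Finset ℝ) (hF : ∀ x ∈ F, x ∈ Ioo (0 : ℝ) 1)
    (hu : ∀ x ∈ Ioo (0 : ℝ) 1, x ∉ F → ∃ c, AEConstNear u c x) :
    ∃ (x : Fin (F.card + 2) → ℝ) (a : Fin (F.card + 1) → ℝ), IsPCRep u x a := by
  have h1 : (1 : ℝ) ∉ F := fun h => (hF _ h).2.false
  have h0 : (0 : ℝ) ∉ insert 1 F := by
    simpa using fun h => (hF _ h).1.false
  set G : Finset ℝ := insert 0 (insert 1 F) with hG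
  have hcard : G.card = F.card + 2 := by
    rw [hG, Finset.card_insert_of_notMem h0, Finset.card_insert_of_notMem h1]
  have hGI : ∀ y ∈ G, y ∈ Icc (0 : ℝ) 1 := by
    intro y hy
    rcases Finset.mem_insert.1 hy with rfl | hy
    · simp
    rcases Finset.mem_insert.1 hy with rfl | hy
    · simp
    exact Ioo_subset_Icc_self (hF y hy)
  set x : Fin (F.card + 2) → ℝ := ⇑(G.orderEmbOfFin hcard)
  have hmono : StrictMono x := (G.orderEmbOfFin hcard).strictMono
  have hxG : ∀ i, x i ∈ G := G.orderEmbOfFin_mem hcard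
  have hsurj : ∀ y ∈ G, ∃ i, x i = y := fun y hy => by
    have : y ∈ range (G.orderEmbOfFin hcard) := by rwa [Finset.range_orderEmbOfFin]
    exact this
  have hx0 : x 0 = 0 := by
    obtain ⟨i, hi⟩ := hsurj 0 (by simp [hG])
    exact le_antisymm (hi ▸ hmono.monotone (Fin.zero_le i)) (hGI _ (hxG 0)).1
  have hx1 : x (Fin.last (F.card + 1)) = 1 := by
    obtain ⟨i, hi⟩ := hsurj 1 (by simp [hG])
    exact le_antisymm (hGI _ (hxG _)).2 (hi ▸ hmono.monotone (Fin.le_last i))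
  have hconst : ∀ l : Fin (F.card + 1), ∃ c, ∀ᵐ t, t ∈ Ioo (x l.castSucc) (x l.succ) → u t = c := by
    intro l
    refine exists_ae_eq_const_of_preconnected isPreconnected_Ioo fun y hy => hu y ?_ fun hyF => ?_
    · exact ⟨(hGI _ (hxG _)).1.trans_lt hy.1, hy.2.trans_le (hGI _ (hxG _)).2⟩
    · obtain ⟨i, rfl⟩ := hsurj y (by simp [hG, hyF])
      have h₁ := hmono.lt_iff_lt.1 hy.1
      have h₂ := hmono.lt_iff_lt.1 hy.2
      exact (Fin.castSucc_lt_iff_succ_le.1 h₁).not_gt h₂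
  choose a ha using hconst
  refine ⟨x, a, hmono, hx0, hx1, ae_mu01_iff.2 ?_⟩
  have hne : ∀ᵐ t : ℝ, ∀ i, t ≠ x i := ae_all_iff.2 fun i => Measure.ae_ne volume (x i)
  filter_upwards [hne, ae_all_iff.2 ha] with t ht hat htI
  obtain ⟨l, hl⟩ := exists_mem_Ioo_of_forall_ne (x := x)
    (lt_of_le_of_ne (hx0 ▸ htI.1) (ht _).symm) (lt_of_le_of_ne (hx1 ▸ htI.2) (ht _)) ht
  rw [hat l hl, stepF_eq_of_mem hmono a hl]

lemma jumps_spec {u : ℝ → ℝ} (hu : IsPC u) :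
    ∃ (x : Fin (jumps u + 2) → ℝ) (a : Fin (jumps u + 1) → ℝ), IsPCRep u x a := by
  refine Nat.sInf_mem (s := {jj : ℕ | ∃ (x : Fin (jj + 2) → ℝ) (a : Fin (jj + 1) → ℝ),
    IsPCRep u x a}) ?_
  obtain ⟨m, x, a, h⟩ := hu
  cases m with
  | zero => exact absurd (h.2.1.symm.trans h.2.2.1) (by norm_num)
  | succ j => exact ⟨j, x, a, h⟩

/-- Among more than `n` disjoint order-connected subsets of `(0,1)`, a piecewise constant function
with at most `n` jumps is a.e. constant on one of them. -/
lemma exists_ae_eq_const_of_jumps_lt {v : ℝ → ℝ} (hv : IsPC v) {G : Finset ℝ}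
    {V : ℝ → Set ℝ} (hV : ∀ y ∈ G, (V y).OrdConnected ∧ V y ⊆ Ioo 0 1)
    (hdisj : (G : Set ℝ).PairwiseDisjoint V) (hcard : jumps v < G.card) :
    ∃ y ∈ G, ∃ c, ∀ᵐ t, t ∈ V y → v t = c := by
  obtain ⟨x, a, -, hx0, hx1, hva⟩ := jumps_spec hv
  obtain ⟨y, hyG, hy⟩ : ∃ y ∈ G, ∀ i, x i ∉ V y := by
    by_contra! h
    choose! i hi using h
    have hmaps : ∀ y ∈ G, i y ∈ ({0, Fin.last _}ᶜ : Finset (Fin (jumps v + 2))) := by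
      intro y hy
      have hIoo := (hV y hy).2 (hi y hy)
      simp only [Finset.mem_compl, Finset.mem_insert, Finset.mem_singleton, not_or]
      refine ⟨fun h => ?_, fun h => ?_⟩
      · rw [h, hx0] at hIoo
        exact hIoo.1.false
      · rw [h, hx1] at hIoo
        exact hIoo.2.false
    have hinj : Set.InjOn i G := by
      intro y hy z hz hyz
      by_contra hne
      exact Set.disjoint_left.1 (hdisj hy hz hne) (hi y hy) (hyz ▸ hi z hz)
    have hle := Finset.card_le_card_of_injOn i hmaps hinj
    rw [Finset.card_compl, Finset.card_pair (Fin.last_pos.ne), Fintype.card_fin] at hle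
    omega
  refine ⟨y, hyG, ?_⟩
  rcases (V y).eq_empty_or_nonempty with hemp | ⟨r, hr⟩
  · exact ⟨0, by simp [hemp]⟩
  refine ⟨stepF x a r, ?_⟩
  filter_upwards [ae_mu01_iff.1 hva] with t ht htV
  rw [ht (Ioo_subset_Icc_self ((hV y hyG).2 htV)),
    stepF_eq_of_ordConnected x a (hV y hyG).1 hy htV hr]

/-- The number of jumps is lower semicontinuous with respect to a.e. convergence. -/
lemma isPC_and_jumps_le_of_tendsto {u : ℝ → ℝ} {v : ℕ → ℝ → ℝ} {n : ℕ}
    (hlim : ∀ᵐ t ∂mu01, Tendsto (fun k => v k t) atTop (𝓝 (u t)))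
    (hv : ∃ᶠ k in atTop, IsPC (v k) ∧ jumps (v k) ≤ n) : IsPC u ∧ jumps u ≤ n := by
  set S : Set ℝ := {x | x ∈ Ioo (0 : ℝ) 1 ∧ ¬ ∃ c, AEConstNear u c x}
  have hbound : ∀ G : Finset ℝ, (G : Set ℝ) ⊆ S → G.card ≤ n := by
    intro G hGS
    by_contra! hn
    obtain ⟨U, hU, hUd⟩ := G.finite_toSet.t2_separation
    have hball : ∀ y ∈ G, ∃ ε > 0, Metric.ball y ε ⊆ U y ∩ Ioo 0 1 := fun y hy =>
      Metric.mem_nhds_iff.1 (inter_mem ((hU y).2.mem_nhds (hU y).1)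
        (isOpen_Ioo.mem_nhds (hGS hy).1))
    choose! ε hε hεU using hball
    have hV : ∀ y ∈ G, (Metric.ball y (ε y)).OrdConnected ∧ Metric.ball y (ε y) ⊆ Ioo 0 1 :=
      fun y hy => ⟨by rw [Real.ball_eq_Ioo]; exact ordConnected_Ioo,
        (hεU y hy).trans inter_subset_right⟩
    have hdisj : (G : Set ℝ).PairwiseDisjoint fun y => Metric.ball y (ε y) :=
      fun y hy z hz hne => (hUd hy hz hne).mono ((hεU y hy).trans inter_subset_left)
        ((hεU z hz).trans inter_subset_left)
    have hfreq : ∃ᶠ k in atTop, ∃ y ∈ G, ∃ c, ∀ᵐ t, t ∈ Metric.ball y (ε y) → v k t = c :=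
      hv.mono fun k hk => exists_ae_eq_const_of_jumps_lt hk.1 hV hdisj (hk.2.trans_lt hn)
    obtain ⟨y, hyG, hy⟩ : ∃ y ∈ G, ∃ᶠ k in atTop, ∃ c,
        ∀ᵐ t, t ∈ Metric.ball y (ε y) → v k t = c := by
      by_contra h
      have hnot : ∀ y ∈ G, ∀ᶠ k in atTop, ¬ ∃ c, ∀ᵐ t, t ∈ Metric.ball y (ε y) → v k t = c :=
        fun y hy => not_frequently.1 fun hfr => h ⟨y, hy, hfr⟩
      refine hfreq (((Finset.eventually_all G).2 hnot).mono fun k hk => ?_)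
      rintro ⟨y, hy, hc⟩
      exact hk y hy hc
    obtain ⟨c, hc⟩ := exists_ae_eq_const_of_tendsto
      ((ae_mu01_iff.1 hlim).mono fun t ht hty => ht (Ioo_subset_Icc_self ((hV y hyG).2 hty))) hy
    exact (hGS hyG).2 ⟨c, aeConstNear_iff.2 ⟨_, Metric.ball_mem_nhds y (hε y hyG), hc⟩⟩
  have hfin : S.Finite := by
    by_contra hinf
    obtain ⟨G, hGS, hG⟩ := Set.Infinite.exists_subset_card_eq hinf (n + 1)
    have := hbound G hGS
    omega
  obtain ⟨x, a, h⟩ := exists_isPCRep_of_finset (u := u) hfin.toFinset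
    (fun x hx => ((hfin.mem_toFinset).1 hx).1)
    (fun x hx hxS => by
      by_contra hc
      exact hxS (hfin.mem_toFinset.2 ⟨hx, hc⟩))
  exact ⟨⟨_, x, a, h⟩, (Nat.sInf_le ⟨x, a, h⟩ : jumps u ≤ _).trans (hbound _ (by simp))⟩

lemma abs_L1dist_sub_le {u v f : ℝ → ℝ} (hu : Integrable u mu01) (hv : Integrable v mu01)
    (hf : Integrable f mu01) : |L1dist v f - L1dist u f| ≤ L1dist v u := by
  have hsub := integral_sub (hv.sub hf).abs (hu.sub hf).abs
  simp only [Pi.sub_apply] at hsub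
  rw [L1dist, L1dist, ← hsub]
  refine abs_integral_le_integral_abs.trans (integral_mono ?_ (hv.sub hu).abs fun t => ?_)
  · exact ((hv.sub hf).abs.sub (hu.sub hf).abs).abs
  · simpa using abs_abs_sub_abs_le (v t - f t) (u t - f t)

lemma exists_subseq_tendsto_ae_of_L1dist {u : ℝ → ℝ} {v : ℕ → ℝ → ℝ} (hu : Integrable u mu01)
    (hv : ∀ k, Integrable (v k) mu01) (h : Tendsto (fun k => L1dist (v k) u) atTop (𝓝 0)) :
    ∃ φ : ℕ → ℕ, StrictMono φ ∧ ∀ᵐ t ∂mu01, Tendsto (fun k => v (φ k) t) atTop (𝓝 (u t)) := by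
  refine TendstoInMeasure.exists_seq_tendsto_ae (tendstoInMeasure_of_tendsto_eLpNorm one_ne_zero
    (fun k => (hv k).1) hu.1 ?_)
  have heq : ∀ k, eLpNorm (v k - u) 1 mu01 = ENNReal.ofReal (L1dist (v k) u) := fun k => by
    rw [eLpNorm_one_eq_lintegral_enorm, L1dist, ← ofReal_integral_norm_eq_lintegral_enorm
      ((hv k).sub hu)]
    rfl
  simp only [heq]
  simpa using ENNReal.tendsto_ofReal h

theorem statement_0
    (f : ℝ → ℝ) (hf : IntegrableOn f (Set.Icc 0 1))
    (γ : ℝ) (hγ : 0 < γ)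
    (X : ℕ → Set ℝ) (hXfin : ∀ k, (X k).Finite) (hXsub : ∀ k, X k ⊆ Set.Icc 0 1)
    (hXnest : ∀ k, X k ⊆ X (k + 1)) (hXdense : Set.Icc (0:ℝ) 1 ⊆ closure (⋃ k, X k))
    (u : ℝ → ℝ) (hu : IntegrableOn u (Set.Icc 0 1))
    (useq : ℕ → ℝ → ℝ) (huseq : ∀ k, IntegrableOn (useq k) (Set.Icc 0 1))
    (hconv : Tendsto (fun k => L1dist (useq k) u) atTop (nhds 0)) :
    Potts γ f u ≤ liminf (fun k => PottsIn γ f (X k) (useq k)) atTop := by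
  refine le_of_forall_gt_imp_ge_of_dense fun C hC => ?_
  rcases eq_or_ne C ⊤ with rfl | hCtop
  · exact le_top
  obtain ⟨φ, hφ, hφC⟩ := extraction_of_frequently_atTop (frequently_lt_of_liminf_lt (h := hC))
  obtain ⟨ψ, hψ, hae⟩ := exists_subseq_tendsto_ae_of_L1dist hu (fun k => huseq (φ k))
    (hconv.comp hφ.tendsto_atTop)
  set v : ℕ → ℝ → ℝ := fun k => useq (φ (ψ k))
  have hL1 : ∀ a b : ℝ → ℝ, 0 ≤ L1dist a b := fun a b => integral_nonneg fun t => abs_nonneg _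
  have hPC : ∀ k, IsPC (v k) ∧ γ * (jumps (v k) : ℝ) + L1dist (v k) f ≤ C.toReal := by
    intro k
    have hk := hφC (ψ k)
    rw [PottsIn] at hk
    split_ifs at hk with hin
    · obtain ⟨m, x, a, h, -⟩ := hin
      exact ⟨⟨m, x, a, h⟩, (ENNReal.ofReal_le_iff_le_toReal hCtop).1 hk.le⟩
    · exact absurd hk not_top_lt
  have hJ : ∀ k, jumps (v k) ≤ ⌊C.toReal / γ⌋₊ := fun k => by
    refine Nat.le_floor ((le_div_iff₀ hγ).2 ?_)
    linarith [(hPC k).2, hL1 (v k) f]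
  have huPC : IsPC u := (isPC_and_jumps_le_of_tendsto hae
    (Frequently.of_forall fun k => ⟨(hPC k).1, hJ k⟩)).1
  have hev : ∀ᶠ k in atTop, jumps u ≤ jumps (v k) := by
    by_contra hnot
    have hfreq : ∃ᶠ k in atTop, jumps (v k) < jumps u :=
      (not_eventually.1 hnot).mono fun k hk => not_le.1 hk
    obtain ⟨k, hk⟩ := hfreq.exists
    have := (isPC_and_jumps_le_of_tendsto (n := jumps u - 1) hae
      (hfreq.mono fun k hk => ⟨(hPC k).1, Nat.le_sub_one_of_lt hk⟩)).2
    omega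
  have hdist : Tendsto (fun k => L1dist (v k) f) atTop (𝓝 (L1dist u f)) := by
    rw [tendsto_iff_norm_sub_tendsto_zero]
    exact squeeze_zero (fun k => norm_nonneg _) (fun k => abs_L1dist_sub_le hu (huseq _) hf)
      (hconv.comp (hφ.comp hψ).tendsto_atTop)
  rw [Potts, if_pos huPC, ENNReal.ofReal_le_iff_le_toReal hCtop]
  refine le_of_tendsto (hdist.const_add _) (hev.mono fun k hk => ?_)
  have hmul : γ * (jumps u : ℝ) ≤ γ * (jumps (v k) : ℝ) := by gcongr
  linarith [(hPC k).2]
end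
end

section
/- Let f ∈ L¹[0,1] and γ > 0. For every u ∈ L¹[0,1] there exists a sequence (u^k) in L¹[0,1] with ‖u^k − u‖_{L¹} → 0 as k → ∞ such that P_γ(u) ≥ limsup_{k→∞} Q_γ^k(u^k). -/
open MeasureTheory Filter Set
open scoped ENNReal Classical

noncomputable section

theorem exists_tendsto_eventually_mem_of_mem_closure_iUnion {X : ℕ → Set ℝ}
    (hfin : ∀ k, (X k).Finite) (hmono : Monotone X) {p : ℝ} (hp : p ∈ closure (⋃ k, X k)) :
    ∃ z : ℕ → ℝ, Tendsto z atTop (nhds p) ∧ ∀ᶠ k in atTop, z k ∈ X k := by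
  have hex : ∀ k, ∃ z, (X k).Nonempty → z ∈ X k ∧ Metric.infDist p (X k) = dist p z := by
    intro k
    by_cases h : (X k).Nonempty
    · obtain ⟨z, hz⟩ := (hfin k).isCompact.exists_infDist_eq_dist h p
      exact ⟨z, fun _ => hz⟩
    · exact ⟨0, fun h' => absurd h' h⟩
  choose z hz using hex
  have key : ∀ ε > 0, ∃ N, ∀ k ≥ N, z k ∈ X k ∧ dist (z k) p < ε := by
    intro ε hε
    obtain ⟨w, hw, hwp⟩ := Metric.mem_closure_iff.1 hp ε hε
    obtain ⟨N, hN⟩ := mem_iUnion.1 hw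
    refine ⟨N, fun k hk => ?_⟩
    have hwk : w ∈ X k := hmono hk hN
    obtain ⟨h1, h2⟩ := hz k ⟨w, hwk⟩
    refine ⟨h1, ?_⟩
    rw [dist_comm, ← h2]
    exact (Metric.infDist_le_dist_of_mem hwk).trans_lt hwp
  refine ⟨z, Metric.tendsto_atTop.2 fun ε hε => ?_, ?_⟩
  · obtain ⟨N, hN⟩ := key ε hε
    exact ⟨N, fun k hk => (hN k hk).2⟩
  · obtain ⟨N, hN⟩ := key 1 one_pos
    exact eventually_atTop.2 ⟨N, fun k hk => (hN k hk).1⟩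

theorem measurable_stepF {m : ℕ} (x : Fin (m + 1) → ℝ) (a : Fin m → ℝ) :
    Measurable (stepF x a) := by
  unfold stepF
  exact Finset.measurable_sum _ fun l _ => measurable_const.indicator measurableSet_Ioo

theorem abs_stepF_le {m : ℕ} (x : Fin (m + 1) → ℝ) (a : Fin m → ℝ) (t : ℝ) :
    |stepF x a t| ≤ ∑ l, |a l| := by
  refine (Finset.abs_sum_le_sum_abs _ _).trans (Finset.sum_le_sum fun l _ => ?_)
  simpa only [Real.norm_eq_abs] using norm_indicator_le_norm_self (fun _ => a l) t

theorem integrableOn_stepF {m : ℕ} (x : Fin (m + 1) → ℝ) (a : Fin m → ℝ) :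
    IntegrableOn (stepF x a) (Icc 0 1) :=
  Integrable.of_bound (measurable_stepF x a).aestronglyMeasurable (∑ l, |a l|)
    (Eventually.of_forall fun t => abs_stepF_le x a t)

/-- Away from the partition points, step functions depend continuously on the partition. -/
theorem tendsto_stepF {m : ℕ} {y : ℕ → Fin (m + 1) → ℝ} {x : Fin (m + 1) → ℝ}
    (a : Fin m → ℝ) (hy : ∀ i, Tendsto (fun k => y k i) atTop (nhds (x i)))
    {t : ℝ} (ht : t ∉ range x) :
    Tendsto (fun k => stepF (y k) a t) atTop (nhds (stepF x a t)) := by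
  refine tendsto_finsetSum _ fun l _ => ?_
  have hlt : ∀ i, ∀ᶠ k in atTop, (y k i < t ↔ x i < t) ∧ (t < y k i ↔ t < x i) := by
    intro i
    rcases lt_or_gt_of_ne (fun h => ht ⟨i, h⟩ : x i ≠ t) with h | h
    · filter_upwards [(hy i).eventually_lt_const h] with k hk
      simp [h, hk, h.not_gt, hk.not_gt]
    · filter_upwards [(hy i).eventually_const_lt h] with k hk
      simp [h, hk, h.not_gt, hk.not_gt]
  refine tendsto_const_nhds.congr' ?_
  filter_upwards [hlt l.castSucc, hlt l.succ] with k h1 h2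
  simp only [indicator, mem_Ioo, h1.1, h2.2]

theorem tendsto_L1dist_stepF {m : ℕ} {y : ℕ → Fin (m + 1) → ℝ} {x : Fin (m + 1) → ℝ}
    (a : Fin m → ℝ) (hy : ∀ i, Tendsto (fun k => y k i) atTop (nhds (x i)))
    {g : ℝ → ℝ} (hg : IntegrableOn g (Icc 0 1)) :
    Tendsto (fun k => L1dist (stepF (y k) a) g) atTop (nhds (L1dist (stepF x a) g)) := by
  have hg' : Integrable g mu01 := hg
  have : IsFiniteMeasure mu01 := by unfold mu01; infer_instance
  refine tendsto_integral_of_dominated_convergence (fun t => (∑ l, |a l|) + |g t|)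
    (fun k => ?_) ((integrable_const _).add hg'.abs) (fun k => ?_) ?_
  · exact ((measurable_stepF (y k) a).aestronglyMeasurable.sub hg'.aestronglyMeasurable).norm
  · refine Eventually.of_forall fun t => ?_
    rw [Real.norm_eq_abs, abs_abs]
    exact (abs_sub _ _).trans (add_le_add_left (abs_stepF_le _ _ _) _)
  · have hx : ∀ᵐ t ∂mu01, t ∉ range x :=
      ae_restrict_of_ae ((finite_range x).countable.ae_notMem volume)
    filter_upwards [hx] with t ht
    exact ((tendsto_stepF a hy ht).sub_const _).abs

theorem L1dist_congr_left {u v g : ℝ → ℝ} (h : ∀ᵐ t ∂mu01, u t = v t) :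
    L1dist u g = L1dist v g := by
  refine integral_congr_ae ?_
  filter_upwards [h] with t ht
  rw [ht]

/-- A piecewise constant function has a representation attaining the minimal number of jumps. -/
theorem IsPC.exists_rep_jumps {u : ℝ → ℝ} (h : IsPC u) :
    ∃ (x : Fin (jumps u + 2) → ℝ) (a : Fin (jumps u + 1) → ℝ), IsPCRep u x a := by
  obtain ⟨m, x, a, hx⟩ := h
  cases m with
  | zero =>
    have h0 := hx.2.1
    have h1 := hx.2.2.1
    have : Fin.last 0 = 0 := rfl
    rw [this, h0] at h1
    exact absurd h1 zero_ne_one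
  | succ n =>
    exact Nat.sInf_mem (s := {jj : ℕ | ∃ (x : Fin (jj + 2) → ℝ) (a : Fin (jj + 1) → ℝ),
      IsPCRep u x a}) ⟨n, x, a, hx⟩

/-- The points of a partition of `[0,1]` can be approximated from `X k`, keeping the endpoints. -/
theorem exists_tendsto_partition {X : ℕ → Set ℝ} (hfin : ∀ k, (X k).Finite)
    (hmono : Monotone X) (hdense : Icc (0 : ℝ) 1 ⊆ closure (⋃ k, X k)) {m : ℕ}
    {x : Fin (m + 1) → ℝ} (hx : StrictMono x) (hx0 : x 0 = 0) (hx1 : x (Fin.last m) = 1) :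
    ∃ y : ℕ → Fin (m + 1) → ℝ, (∀ i, Tendsto (fun k => y k i) atTop (nhds (x i))) ∧
      ∀ᶠ k in atTop, StrictMono (y k) ∧ y k 0 = 0 ∧ y k (Fin.last m) = 1 ∧
        ∀ i, i ≠ 0 → i ≠ Fin.last m → y k i ∈ X k := by
  have hz : ∀ i, ∃ z : ℕ → ℝ, Tendsto z atTop (nhds (x i)) ∧ ∀ᶠ k in atTop,
      (i = 0 → z k = 0) ∧ (i = Fin.last m → z k = 1) ∧
        (i ≠ 0 → i ≠ Fin.last m → z k ∈ X k) := by
    intro i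
    by_cases hi : i = 0 ∨ i = Fin.last m
    · refine ⟨fun _ => x i, tendsto_const_nhds, Eventually.of_forall fun k => ⟨?_, ?_, ?_⟩⟩
      · rintro rfl; exact hx0
      · rintro rfl; exact hx1
      · intro h0 h1; exact absurd hi (by tauto)
    · have hxi : x i ∈ Icc (0 : ℝ) 1 :=
        ⟨hx0 ▸ hx.monotone (Fin.zero_le i), hx1 ▸ hx.monotone (Fin.le_last i)⟩
      obtain ⟨z, h1, h2⟩ :=
        exists_tendsto_eventually_mem_of_mem_closure_iUnion hfin hmono (hdense hxi)
      refine ⟨z, h1, h2.mono fun k hk => ⟨fun h => ?_, fun h => ?_, fun _ _ => hk⟩⟩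
      · exact absurd (Or.inl h) hi
      · exact absurd (Or.inr h) hi
  choose z hzx hzX using hz
  refine ⟨fun k i => z i k, hzx, ?_⟩
  have hlt : ∀ᶠ k in atTop, ∀ i : Fin m, z i.castSucc k < z i.succ k :=
    eventually_all.2 fun i =>
      (hzx i.castSucc).eventually_lt (hzx i.succ) (hx i.castSucc_lt_succ)
  filter_upwards [hlt, eventually_all.2 hzX] with k h1 h2
  exact ⟨Fin.strictMono_iff_lt_succ.2 h1, (h2 0).1 rfl, (h2 _).2.1 rfl, fun i => (h2 i).2.2⟩

theorem statement_1
    (f : ℝ → ℝ) (hf : IntegrableOn f (Set.Icc 0 1))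
    (γ : ℝ) (hγ : 0 < γ)
    (X : ℕ → Set ℝ) (hXfin : ∀ k, (X k).Finite) (hXsub : ∀ k, X k ⊆ Set.Icc 0 1)
    (hXnest : ∀ k, X k ⊆ X (k + 1)) (hXdense : Set.Icc (0:ℝ) 1 ⊆ closure (⋃ k, X k))
    (u : ℝ → ℝ) (hu : IntegrableOn u (Set.Icc 0 1)) :
    ∃ useq : ℕ → ℝ → ℝ, (∀ k, IntegrableOn (useq k) (Set.Icc 0 1)) ∧
      Tendsto (fun k => L1dist (useq k) u) atTop (nhds 0) ∧
      limsup (fun k => PottsIn γ f (X k) (useq k)) atTop ≤ Potts γ f u := by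
  by_cases hpc : IsPC u
  swap
  · exact ⟨fun _ => u, fun _ => hu, by simp [L1dist], by simp [Potts, hpc]⟩
  obtain ⟨x, a, hx, hx0, hx1, hux⟩ := hpc.exists_rep_jumps
  obtain ⟨y, hyx, hyX⟩ :=
    exists_tendsto_partition hXfin (monotone_nat_of_le_succ hXnest) hXdense hx hx0 hx1
  refine ⟨fun k => stepF (y k) a, fun k => integrableOn_stepF _ _, ?_, ?_⟩
  · have h := tendsto_L1dist_stepF a hyx hu
    rw [← L1dist_congr_left hux] at h
    simpa [L1dist] using h
  · have hlim : Tendsto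
        (fun k => ENNReal.ofReal (γ * (jumps u : ℝ) + L1dist (stepF (y k) a) f)) atTop
        (nhds (Potts γ f u)) := by
      rw [Potts, if_pos hpc, L1dist_congr_left hux]
      exact ENNReal.tendsto_ofReal ((tendsto_L1dist_stepF a hyx hf).const_add _)
    rw [← hlim.limsup_eq]
    refine limsup_le_limsup ?_
    filter_upwards [hyX] with k hk
    obtain ⟨hmono, h0, h1, hmem⟩ := hk
    have hrep : IsPCRep (stepF (y k) a) (y k) a :=
      ⟨hmono, h0, h1, Eventually.of_forall fun _ => rfl⟩
    have hj : jumps (stepF (y k) a) ≤ jumps u := Nat.sInf_le ⟨y k, a, hrep⟩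
    rw [PottsIn, if_pos ⟨_, y k, a, hrep, hmem⟩]
    gcongr
end
end
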